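/- arXiv:1107.3220 — 2 statements merged into one kernel-verified Lean document; each statement's English description precedes it below -/
import Mathlib

section
/- Let a > 0, A₀ ≥ 0, and let f : [0,∞) → ℝ be continuous with f(t) ≥ 0 for all t, f(0) ≤ A₀, and suppose that at every t with f(t) > 0 the upper forward difference quotient satisfies limsup_{h→0⁺} (f(t+h) − f(t))/h ≤ −a. Then f(t) = 0 for all t ≥ A₀/a. (With a = 4π and f(t) = A(t) the minimal-sphere area function, this is the analytic core of Theorem 3.1: the area A(t) satisfies dA/dt ≤ −4π in the sense of the limsup of forward difference quotients, so nontrivial topology becomes extinct by time T = A₀/(4π).) -/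
theorem extinction_aux (a : ℝ) (ha : 0 < a) (f : ℝ → ℝ) (t c : ℝ) (hc : c < a)
    (h : Filter.limsup (fun h : ℝ => (f (t + h) - f t) / h) (nhdsWithin 0 (Set.Ioi 0)) ≤ -a) :
    ∀ᶠ h in nhdsWithin (0 : ℝ) (Set.Ioi 0), f (t + h) ≤ f t - c * h := by
  rw [Filter.limsup_eq] at h
  have hne : {b : ℝ | ∀ᶠ h in nhdsWithin (0 : ℝ) (Set.Ioi 0),
      (f (t + h) - f t) / h ≤ b}.Nonempty := by
    by_contra hcon
    rw [Set.not_nonempty_iff_eq_empty] at hcon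
    rw [hcon, Real.sInf_empty] at h
    linarith
  obtain ⟨b, hb, hbc⟩ := exists_lt_of_csInf_lt hne (lt_of_le_of_lt h (neg_lt_neg hc))
  filter_upwards [hb, self_mem_nhdsWithin] with h hh hpos
  have hpos' : 0 < h := hpos
  rw [div_le_iff₀ hpos'] at hh
  nlinarith

theorem extinction_bound (a A₀ : ℝ) (ha : 0 < a) (f : ℝ → ℝ)
    (hcont : ContinuousOn f (Set.Ici (0 : ℝ)))
    (hinit : f 0 ≤ A₀)
    (hdini : ∀ t, 0 ≤ t → 0 < f t →
      Filter.limsup (fun h : ℝ => (f (t + h) - f t) / h) (nhdsWithin 0 (Set.Ioi 0)) ≤ -a)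
    (c ε : ℝ) (hc0 : 0 ≤ c) (hc : c < a) (hε : 0 < ε) (t : ℝ) (ht : 0 ≤ t) :
    f t ≤ max (A₀ - c * t) ε := by
  have hcI : ContinuousOn f (Set.Icc 0 t) := hcont.mono Set.Icc_subset_Ici_self
  have hB : Continuous (fun x : ℝ => max (A₀ - c * x) ε) := by fun_prop
  have hcl : IsClosed ({x | f x ≤ max (A₀ - c * x) ε} ∩ Set.Icc 0 t) := by
    rw [Set.inter_comm]
    exact (hcI.prodMk hB.continuousOn).preimage_isClosed_of_isClosed isClosed_Icc
      OrderClosedTopology.isClosed_le'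
  refine hcl.Icc_subset_of_forall_exists_gt ?_ ?_ (Set.right_mem_Icc.2 ht)
  · simp [hinit]
  · rintro x ⟨hx, hx0, hxt⟩ y hy
    have hy' : x < y := hy
    rw [Set.mem_setOf_eq] at hx
    have key : ∀ᶠ h in nhdsWithin (0 : ℝ) (Set.Ioi 0),
        f (x + h) ≤ max (A₀ - c * (x + h)) ε := by
      rcases lt_or_ge 0 (f x) with hp | hp
      · filter_upwards [extinction_aux a ha f x c hc (hdini x hx0 hp), self_mem_nhdsWithin]
          with h hh hpos
        have hpos' : 0 < h := hpos
        have hch := mul_nonneg hc0 hpos'.le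
        rcases le_max_iff.1 hx with h1 | h1
        · exact le_max_of_le_left (by linarith)
        · exact le_max_of_le_right (by linarith)
      · have h1 : ∀ᶠ z in nhdsWithin x (Set.Ici 0), f z < ε :=
          (hcont x hx0).eventually_lt_const (lt_of_le_of_lt hp hε)
        have h2 : Filter.Tendsto (fun h : ℝ => x + h) (nhdsWithin 0 (Set.Ioi 0))
            (nhdsWithin x (Set.Ici 0)) := by
          refine tendsto_nhdsWithin_iff.2 ⟨?_, ?_⟩
          · have : Filter.Tendsto (fun h : ℝ => x + h) (nhds 0) (nhds (x + 0)) :=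
              (continuous_const.add continuous_id).tendsto 0
            rw [add_zero] at this
            exact this.mono_left nhdsWithin_le_nhds
          · filter_upwards [self_mem_nhdsWithin] with h hpos
            exact add_nonneg hx0 (le_of_lt hpos)
        filter_upwards [h2.eventually h1] with h hh
        exact le_max_of_le_right hh.le
    obtain ⟨h, hh, hpos, hle⟩ :=
      (key.and (Ioc_mem_nhdsGT (sub_pos.2 hy'))).exists
    exact ⟨x + h, hh, by simpa using hpos, by linarith⟩

/-- analytic core of Theorem 3.1. If f ≥ 0 on [0,∞) is continuous,
f(0) ≤ A₀, and at every t ≥ 0 with f(t) > 0 the upper forward difference quotient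
(upper right Dini derivative) is ≤ -a, then f vanishes from time A₀/a on. -/
theorem extinction_of_area (a A₀ : ℝ) (ha : 0 < a) (hA₀ : 0 ≤ A₀) (f : ℝ → ℝ)
    (hcont : ContinuousOn f (Set.Ici (0 : ℝ)))
    (hnonneg : ∀ t, 0 ≤ t → 0 ≤ f t)
    (hinit : f 0 ≤ A₀)
    (hdini : ∀ t, 0 ≤ t → 0 < f t →
      Filter.limsup (fun h : ℝ => (f (t + h) - f t) / h) (nhdsWithin 0 (Set.Ioi 0)) ≤ -a) :
    ∀ t, A₀ / a ≤ t → f t = 0 := by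
  intro t ht
  have ht0 : 0 ≤ t := le_trans (by positivity) ht
  rw [div_le_iff₀ ha] at ht
  by_contra hne
  have hp : 0 < f t := lt_of_le_of_ne (hnonneg t ht0) (Ne.symm hne)
  obtain ⟨δ, hδ0, hδa, hδ⟩ : ∃ δ : ℝ, 0 < δ ∧ δ ≤ a ∧ δ * (t + 1) ≤ f t := by
    refine ⟨min a (f t / (t + 1)), lt_min ha (by positivity), min_le_left _ _, ?_⟩
    rw [← le_div_iff₀ (by positivity)]
    exact min_le_right _ _
  have := extinction_bound a A₀ ha f hcont hinit hdini (a - δ) (f t / 2) (by linarith)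
    (by linarith) (by linarith) t ht0
  rcases le_max_iff.1 this with h1 | h1
  · nlinarith
  · linarith
end

section
/- Let R : ℝ³ → ℝ be continuous, compactly supported, with R ≥ 0 everywhere and R not identically zero. Then the infimum, over all smooth compactly supported u : ℝ³ → ℝ, of ∫_{ℝ³} ( 4‖∇(1+u)‖² + R·(1+u)² ) dx is strictly positive. (This is the flat-background version of the statement that the noncompact Perelman-energy λ_AF(g) = inf_{w→1} ∫_M (4|∇w|² + Rw²) dV is strictly positive on asymptotically flat manifolds with nonnegative scalar curvature unless the scalar curvature vanishes identically.) -/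
open MeasureTheory

/-- Sobolev inequality in real-integral form. -/
lemma sobolev_six : ∃ K : ℝ, 0 ≤ K ∧ ∀ u : EuclideanSpace ℝ (Fin 3) → ℝ,
    ContDiff ℝ 1 u → HasCompactSupport u →
    ∫ x, (u x) ^ 6 ≤ K * (∫ x, ‖fderiv ℝ u x‖ ^ 2) ^ 3 := by
  obtain ⟨C, hC⟩ : ∃ C : NNReal, C = eLpNormLESNormFDerivOfEqInnerConst
    (volume : Measure (EuclideanSpace ℝ (Fin 3))) ((2 : NNReal) : ℝ) := ⟨_, rfl⟩
  refine ⟨(C : ℝ) ^ 6, by positivity, fun u hu hs => ?_⟩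
  have h := eLpNorm_le_eLpNorm_fderiv_of_eq_inner
    (volume : Measure (EuclideanSpace ℝ (Fin 3))) hu hs (p := 2) (p' := 6) (by norm_num)
    (by simp) (by simp; norm_num)
  rw [← hC] at h
  have hm6 : MemLp u (6 : NNReal) volume := hu.continuous.memLp_of_hasCompactSupport hs
  have hm2 : MemLp (fderiv ℝ u) (2 : NNReal) volume :=
    (hu.continuous_fderiv one_ne_zero).memLp_of_hasCompactSupport (hs.fderiv ℝ)
  rw [hm6.eLpNorm_eq_integral_rpow_norm (by simp) (by simp),
    hm2.eLpNorm_eq_integral_rpow_norm (by simp) (by simp)] at h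
  have e6 : ∀ x, ‖u x‖ ^ (6 : ℝ) = (u x) ^ 6 := fun x => by
    rw [show (6 : ℝ) = ((6 : ℕ) : ℝ) by norm_num, Real.rpow_natCast, Real.norm_eq_abs]
    exact Even.pow_abs (by decide) _
  have e2 : ∀ x, ‖fderiv ℝ u x‖ ^ (2 : ℝ) = ‖fderiv ℝ u x‖ ^ 2 := fun x => by
    rw [show (2 : ℝ) = ((2 : ℕ) : ℝ) by norm_num, Real.rpow_natCast]
  simp only [ENNReal.coe_toReal, NNReal.coe_ofNat, e6, e2] at h
  have hX : 0 ≤ ∫ x, (u x) ^ 6 := integral_nonneg fun x => by positivity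
  have hD : 0 ≤ ∫ x, ‖fderiv ℝ u x‖ ^ 2 := integral_nonneg fun x => by positivity
  rw [← ENNReal.ofReal_coe_nnreal, ← ENNReal.ofReal_mul (by positivity),
    ENNReal.ofReal_le_ofReal_iff (by positivity)] at h
  have h6 := pow_le_pow_left₀ (by positivity) h 6
  rw [mul_pow, ← Real.rpow_natCast, ← Real.rpow_mul hX,
    ← Real.rpow_natCast (_ ^ (2 : ℝ)⁻¹), ← Real.rpow_mul hD] at h6
  norm_num at h6
  exact h6

set_option maxHeartbeats 400000 in
/-- flat-background positivity of the noncompact Perelman-energy λ_AF: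
if R ≥ 0 is continuous, compactly supported, and not identically zero, then
inf over smooth compactly supported u of ∫ (4‖∇(1+u)‖² + R(1+u)²) is strictly positive. -/
theorem lambdaAF_positive (R : EuclideanSpace ℝ (Fin 3) → ℝ)
    (hRcont : Continuous R) (hRsupp : HasCompactSupport R)
    (hRnonneg : ∀ x, 0 ≤ R x) (hRne : R ≠ 0) :
    0 < sInf { I : ℝ | ∃ u : EuclideanSpace ℝ (Fin 3) → ℝ,
      ContDiff ℝ (⊤ : ℕ∞) u ∧ HasCompactSupport u ∧
      I = ∫ x, (4 * ‖gradient (fun y => 1 + u y) x‖ ^ 2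
                + R x * (1 + u x) ^ 2) } := by
  obtain ⟨K, hK, hS⟩ := sobolev_six
  have hRint : Integrable R := hRcont.integrable_of_hasCompactSupport hRsupp
  have hA : 0 < ∫ x, R x := by
    obtain ⟨x, hx⟩ := Function.ne_iff.1 hRne
    exact hRcont.integral_pos_of_hasCompactSupport_nonneg_nonzero hRsupp hRnonneg hx
  obtain ⟨B, hB⟩ := hRcont.bounded_above_of_compact_support hRsupp
  have hB0 : 0 ≤ B := (norm_nonneg _).trans (hB 0)
  have hRB : ∀ x, R x ≤ B := fun x => (le_abs_self _).trans (hB x)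
  set A := ∫ x, R x with hAdef
  have hM : 0 < 2 + 32 * B * K := by positivity
  have hpos : 0 < min 1 (A / (2 * (2 + 32 * B * K))) := by positivity
  refine hpos.trans_le (le_csInf ⟨_, 0, contDiff_const, HasCompactSupport.zero, rfl⟩ ?_)
  rintro I ⟨u, hu, hs, rfl⟩
  have hg : ∀ x, ‖gradient (fun y => 1 + u y) x‖ = ‖fderiv ℝ u x‖ := fun x => by
    rw [gradient, LinearIsometryEquiv.norm_map, fderiv_const_add]
  simp only [hg]
  have hu1 : ContDiff ℝ 1 u := hu.of_le (by exact_mod_cast le_top)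
  have hSu := hS u hu1 hs
  have hc6 : Continuous (fun x => (u x) ^ 6) := by
    have := hu.continuous
    fun_prop
  have hs6 : HasCompactSupport (fun x => (u x) ^ 6) :=
    hs.comp_left (g := fun t : ℝ => t ^ 6) (by norm_num)
  have hi6 : Integrable (fun x => (u x) ^ 6) := hc6.integrable_of_hasCompactSupport hs6
  have hcD : Continuous (fun x => ‖fderiv ℝ u x‖ ^ 2) := by
    have := hu1.continuous_fderiv one_ne_zero
    fun_prop
  have hsD : HasCompactSupport (fun x => ‖fderiv ℝ u x‖ ^ 2) :=
    (hs.fderiv ℝ).comp_left (g := fun t => ‖t‖ ^ 2) (by simp)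
  have hiD : Integrable (fun x => ‖fderiv ℝ u x‖ ^ 2) := hcD.integrable_of_hasCompactSupport hsD
  have hcR : Continuous (fun x => R x * (1 + u x) ^ 2) := by
    have := hu.continuous
    fun_prop
  have hsR : HasCompactSupport (fun x => R x * (1 + u x) ^ 2) := 
    HasCompactSupport.mul_right (f' := fun x => (1 + u x) ^ 2) hRsupp
  have hiR : Integrable (fun x => R x * (1 + u x) ^ 2) := hcR.integrable_of_hasCompactSupport hsR
  rw [integral_add (hiD.const_mul 4) hiR, integral_const_mul]
  have hD : 0 ≤ ∫ x, ‖fderiv ℝ u x‖ ^ 2 := integral_nonneg fun x => by positivity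
  have hW : 0 ≤ ∫ x, R x * (1 + u x) ^ 2 :=
    integral_nonneg fun x => mul_nonneg (hRnonneg x) (sq_nonneg _)
  have hkey : A ≤ 2 * (∫ x, R x * (1 + u x) ^ 2) + ((1 / 2) * A + 32 * B * ∫ x, (u x) ^ 6) := by
    have hj : Integrable (fun x => 1 / 2 * R x + 32 * B * (u x) ^ 6) :=
      (hRint.const_mul _).add (hi6.const_mul _)
    have hj2 : Integrable (fun x => 2 * (R x * (1 + u x) ^ 2)
        + (1 / 2 * R x + 32 * B * (u x) ^ 6)) := (hiR.const_mul 2).add hj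
    rw [hAdef, ← integral_const_mul, ← integral_const_mul, ← integral_const_mul,
      ← integral_add (hRint.const_mul _) (hi6.const_mul _),
      ← integral_add (hiR.const_mul _) hj]
    refine integral_mono hRint hj2 fun x => ?_
    show R x ≤ 2 * (R x * (1 + u x) ^ 2) + (1 / 2 * R x + 32 * B * (u x) ^ 6)
    have h1 : (u x) ^ 2 ≤ 1 / 4 + 16 * (u x) ^ 6 := by
      rcases le_total ((u x) ^ 2) (1 / 4) with h | h
      · have : 0 ≤ (u x) ^ 6 := by positivity
        linarith
      · have h4 : (1 / 4 : ℝ) ^ 2 ≤ ((u x) ^ 2) ^ 2 := pow_le_pow_left₀ (by norm_num) h 2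
        nlinarith [mul_le_mul_of_nonneg_left h4 (sq_nonneg (u x))]
    have h2 : R x * (u x) ^ 6 ≤ B * (u x) ^ 6 :=
      mul_le_mul_of_nonneg_right (hRB x) (by positivity)
    have h3 : 1 ≤ 2 * (1 + u x) ^ 2 + 2 * (u x) ^ 2 := by nlinarith [sq_nonneg (1 + 2 * u x)]
    have h4 : 1 ≤ 2 * (1 + u x) ^ 2 + (1 / 2 + 32 * (u x) ^ 6) := by linarith
    have h5 := mul_le_mul_of_nonneg_left h4 (hRnonneg x)
    linarith
  generalize (∫ x, R x * (1 + u x) ^ 2) = W at *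
  generalize (∫ x, ‖fderiv ℝ u x‖ ^ 2) = D at *
  generalize (∫ x, (u x) ^ 6) = X at *
  by_contra! hlt
  obtain ⟨hl1, hl2⟩ := lt_min_iff.1 hlt
  rw [lt_div_iff₀ (by positivity)] at hl2
  have hD3 : D ^ 3 ≤ D := by
    have : D ≤ 1 := by linarith
    simpa using pow_le_pow_of_le_one hD this (show 1 ≤ 3 by norm_num)
  have hX : B * X ≤ B * (K * D) :=
    mul_le_mul_of_nonneg_left (hSu.trans (mul_le_mul_of_nonneg_left hD3 hK)) hB0
  have hBK : 0 ≤ B * K := mul_nonneg hB0 hK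
  nlinarith [mul_nonneg hBK hD, mul_nonneg hBK hW]
end
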